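/- (Deterministic additive-error embedding of JS into ℓ₂²) There is an absolute constant C > 0 such that for every integer d ≥ 1 and every ε ∈ (0,1) there exist an integer m ≤ C·(d²/ε)·ln(d/ε) and a map φ : Δ_d → ℝ^m such that for all p, q ∈ Δ_d: |‖φ(p) − φ(q)‖₂² − JS(p,q)| ≤ ε. -/

import Mathlib

open Real

/-- One-dimensional Jensen–Shannon divergence (with `0·log 0 = 0`, `f_J(0,0) = 0`,
which hold automatically since `Real.log 0 = 0` and `0/0 = 0` in Lean). -/
noncomputable def fJ (x y : ℝ) : ℝ :=
  x * Real.log (2 * x / (x + y)) + y * Real.log (2 * y / (x + y))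

/-- The Jensen–Shannon divergence on the simplex `Δ_d`. -/
noncomputable def JS {d : ℕ} (p q : Fin d → ℝ) : ℝ := ∑ i, fJ (p i) (q i)

/-!
The curve `γ : x ↦ (t ↦ (1 - exp (-x t)) / t)` in `L²(0, ∞)` satisfies
`‖γ x - γ y‖² = 2 f_J(x, y)`: an integration by parts turns the left-hand side into two Frullani
integrals. Hence `√JS` is a Hilbert space distance. Since `f_J(x, y) ≤ 2 (√x - √y)²`, rounding
every coordinate down to a grid `{(k / N)² : 0 ≤ k ≤ N}`, uniform in `√x`, moves a point of the
simplex by only `O(√d / N)` in this distance, and therefore changes `JS` by `O(√d / N)`, as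
`JS ≤ 2` on the simplex. The grid spans at most `N + 1` dimensions per coordinate, which gives a
total dimension `O(d^{3/2} / ε)`; the bound `d - 1 ≤ d log d` absorbs this into
`(d² / ε) log (d / ε)`, including the case `d = 1`.
-/

open Filter Topology MeasureTheory
open scoped NNReal

lemma integrableOn_and_integral_Ioi_of_tendsto_intervalIntegral {f : ℝ → ℝ} {I : ℝ}
    (hf : LocallyIntegrableOn f (Set.Ioi 0)) (hnonneg : ∀ t ∈ Set.Ioi 0, 0 ≤ f t)
    (hlim : Tendsto (fun p : ℝ × ℝ ↦ ∫ t in p.1..p.2, f t) ((𝓝[>] 0) ×ˢ atTop) (𝓝 I)) :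
    IntegrableOn f (Set.Ioi 0) ∧ ∫ t in Set.Ioi 0, f t = I := by
  let a (n : ℕ) : ℝ := 1 / ((n : ℝ) + 1)
  have ha_pos (n : ℕ) : 0 < a n := Nat.one_div_pos_of_nat
  have ha : Tendsto a atTop (𝓝 0) := tendsto_one_div_add_atTop_nhds_zero_nat
  have ha' : Tendsto a atTop (𝓝[>] 0) :=
    tendsto_nhdsWithin_iff.2 ⟨ha, Eventually.of_forall ha_pos⟩
  let b (n : ℕ) : ℝ := n + 1
  have hb : Tendsto b atTop atTop :=
    tendsto_atTop_add_const_right _ 1 tendsto_natCast_atTop_atTop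
  have hab (n : ℕ) : a n ≤ b n := by
    have hn : (1 : ℝ) ≤ n + 1 := by simp
    exact ((div_le_one (by positivity)).2 hn).trans hn
  have hcover : AECover (volume.restrict (Set.Ioi (0 : ℝ))) atTop
      fun n ↦ Set.Ioc (a n) (b n) :=
    (aecover_Ioi_of_Ioi ha).inter ((aecover_Iic hb).mono Measure.restrict_le_self)
  have hint (n : ℕ) : IntegrableOn f (Set.Ioc (a n) (b n)) (volume.restrict (Set.Ioi 0)) :=
    ((hf.integrableOn_compact_subset (Set.Icc_subset_Ioi_iff (hab n) |>.2 (ha_pos n))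
      isCompact_Icc).mono_set Set.Ioc_subset_Icc_self).mono_measure Measure.restrict_le_self
  have hlim' : Tendsto (fun n ↦ ∫ t in Set.Ioc (a n) (b n), f t ∂volume.restrict (Set.Ioi 0))
      atTop (𝓝 I) := by
    refine (hlim.comp (ha'.prodMk hb)).congr fun n ↦ ?_
    have hsub : Set.Ioc (a n) (b n) ⊆ Set.Ioi 0 := fun t ht ↦ (ha_pos n).trans ht.1
    rw [Measure.restrict_restrict_of_subset hsub]
    exact intervalIntegral.integral_of_le (hab n)
  have hnonneg' : 0 ≤ᵐ[volume.restrict (Set.Ioi 0)] f :=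
    ae_restrict_of_forall_mem measurableSet_Ioi hnonneg
  exact ⟨hcover.integrable_of_integral_tendsto_of_nonneg_ae I hint hnonneg' hlim',
    hcover.integral_eq_of_tendsto_of_nonneg_ae I hnonneg' hint hlim'⟩

section LaplaceFeature

/-- The feature of `x` in `L²(0, ∞)`; its squared distances are `2 f_J` on `[0, ∞)`. The summand `1`
makes each single feature square integrable at `0`. -/
noncomputable def laplaceFeature (x t : ℝ) : ℝ := (1 - exp (-(x * t))) / t

lemma laplaceFeature_sub (x y t : ℝ) :
    laplaceFeature x t - laplaceFeature y t = (exp (-(y * t)) - exp (-(x * t))) / t := by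
  simp only [laplaceFeature]
  ring

lemma continuousOn_laplaceFeature (x : ℝ) : ContinuousOn (laplaceFeature x) (Set.Ioi 0) :=
  ContinuousOn.div (by fun_prop) (by fun_prop) fun _ ht ↦ (Set.mem_Ioi.1 ht).ne'

lemma hasDerivAt_exp_neg_mul (x t : ℝ) :
    HasDerivAt (fun t ↦ exp (-(x * t))) (-(x * exp (-(x * t)))) t :=
  (((hasDerivAt_id t).const_mul x).neg.exp).congr_deriv (by simp [mul_comm])

lemma hasDerivAt_sq_exp_sub_exp_div (x y : ℝ) {t : ℝ} (ht : t ≠ 0) :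
    HasDerivAt (fun t ↦ -((exp (-(y * t)) - exp (-(x * t))) ^ 2 / t))
      ((laplaceFeature x t - laplaceFeature y t) ^ 2
        - (2 * (x * (t⁻¹ * (exp (-((x + y) * t)) - exp (-(2 * x * t)))))
          + 2 * (y * (t⁻¹ * (exp (-((x + y) * t)) - exp (-(2 * y * t))))))) t := by
  have hdiff := (hasDerivAt_exp_neg_mul y t).sub (hasDerivAt_exp_neg_mul x t)
  refine ((hdiff.pow 2).div (hasDerivAt_id t) ht).neg.congr_deriv ?_
  have hxy : exp (-((x + y) * t)) = exp (-(x * t)) * exp (-(y * t)) := by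
    rw [← exp_add]; ring_nf
  have hsq (z : ℝ) : exp (-(2 * z * t)) = exp (-(z * t)) ^ 2 := by
    rw [← exp_nat_mul]; ring_nf
  simp only [laplaceFeature_sub, hxy, hsq, id, Pi.sub_apply, Pi.pow_apply]
  field_simp
  ring

lemma integral_sq_laplaceFeature_sub (x y : ℝ) {a b : ℝ} (ha : 0 < a) (hb : 0 < b) :
    ∫ t in a..b, (laplaceFeature x t - laplaceFeature y t) ^ 2 =
      (exp (-(y * a)) - exp (-(x * a))) ^ 2 / a - (exp (-(y * b)) - exp (-(x * b))) ^ 2 / b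
      + 2 * (x * ∫ t in a..b, t⁻¹ * (exp (-((x + y) * t)) - exp (-(2 * x * t))))
      + 2 * (y * ∫ t in a..b, t⁻¹ * (exp (-((x + y) * t)) - exp (-(2 * y * t)))) := by
  have hsub : Set.uIcc a b ⊆ Set.Ioi 0 := fun _ ht ↦ (lt_min ha hb).trans_le ht.1
  have hinv : ContinuousOn (fun t : ℝ ↦ t⁻¹) (Set.uIcc a b) :=
    continuousOn_inv₀.mono fun t ht ↦ (Set.mem_Ioi.1 (hsub ht)).ne'
  have hfrullani (z : ℝ) : IntervalIntegrable
      (fun t ↦ 2 * (z * (t⁻¹ * (exp (-((x + y) * t)) - exp (-(2 * z * t)))))) volume a b :=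
    (continuousOn_const.mul (continuousOn_const.mul
      (hinv.mul (by fun_prop)))).intervalIntegrable
  have hfeature : IntervalIntegrable (fun t ↦ (laplaceFeature x t - laplaceFeature y t) ^ 2)
      volume a b :=
    ((((continuousOn_laplaceFeature x).sub (continuousOn_laplaceFeature y)).pow 2).mono
      hsub).intervalIntegrable
  have hFTC := intervalIntegral.integral_eq_sub_of_hasDerivAt
    (fun t ht ↦ hasDerivAt_sq_exp_sub_exp_div x y (Set.mem_Ioi.1 (hsub ht)).ne')
    (hfeature.sub ((hfrullani x).add (hfrullani y)))
  rw [intervalIntegral.integral_sub hfeature ((hfrullani x).add (hfrullani y)),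
    intervalIntegral.integral_add (hfrullani x) (hfrullani y)] at hFTC
  simp only [intervalIntegral.integral_const_mul] at hFTC
  linarith

lemma tendsto_sq_exp_sub_exp_div_nhdsGT_zero (x y : ℝ) :
    Tendsto (fun t ↦ (exp (-(y * t)) - exp (-(x * t))) ^ 2 / t) (𝓝[>] 0) (𝓝 0) := by
  have hderiv := (hasDerivAt_exp_neg_mul y 0).sub (hasDerivAt_exp_neg_mul x 0)
  have hzero := hderiv.continuousAt.tendsto.mono_left (nhdsWithin_le_nhds (s := Set.Ioi 0))
  have hprod := hderiv.tendsto_slope_zero_right.mul hzero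
  simp only [Pi.sub_apply, zero_add, mul_zero, neg_zero, exp_zero, sub_self, sub_zero,
    smul_eq_mul] at hprod
  refine hprod.congr fun t ↦ ?_
  ring

lemma tendsto_sq_exp_sub_exp_div_atTop {x y : ℝ} (hx : 0 ≤ x) (hy : 0 ≤ y) :
    Tendsto (fun t ↦ (exp (-(y * t)) - exp (-(x * t))) ^ 2 / t) atTop (𝓝 0) := by
  refine tendsto_of_tendsto_of_tendsto_of_le_of_le' tendsto_const_nhds tendsto_inv_atTop_zero ?_ ?_
  all_goals filter_upwards [eventually_gt_atTop 0] with t ht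
  · positivity
  · have hexp {z : ℝ} (hz : 0 ≤ z) : exp (-(z * t)) ∈ Set.Icc 0 1 :=
      ⟨(exp_pos _).le, exp_le_one_iff.2 (neg_nonpos.2 (mul_nonneg hz ht.le))⟩
    have habs : |exp (-(y * t)) - exp (-(x * t))| ≤ 1 :=
      abs_sub_le_of_nonneg_of_le (hexp hy).1 (hexp hy).2 (hexp hx).1 (hexp hx).2
    rw [inv_eq_one_div]
    gcongr
    exact (sq_le_one_iff_abs_le_one _).2 habs

lemma tendsto_mul_integral_frullani {x s : ℝ} (hx : 0 ≤ x) (hs : 0 < s) :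
    Tendsto (fun p : ℝ × ℝ ↦ x * ∫ t in p.1..p.2, t⁻¹ * (exp (-(s * t)) - exp (-(2 * x * t))))
      ((𝓝[>] 0) ×ˢ atTop) (𝓝 (x * log (2 * x / s))) := by
  rcases hx.eq_or_lt with rfl | hx
  · simp
  have hcont : Continuous fun t : ℝ ↦ exp (-t) := by fun_prop
  have hzero : Tendsto (fun t : ℝ ↦ exp (-t)) (𝓝[>] 0) (𝓝 1) := by
    simpa using (hcont.tendsto 0).mono_left nhdsWithin_le_nhds
  have hlim := Frullani.tendsto_intervalIntegral
    (hcont.locallyIntegrable.locallyIntegrableOn _) hs (mul_pos two_pos hx) hzero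
    tendsto_exp_neg_atTop_nhds_zero
  simpa using hlim.const_mul x

lemma tendsto_integral_sq_laplaceFeature_sub {x y : ℝ} (hx : 0 ≤ x) (hy : 0 ≤ y) :
    Tendsto (fun p : ℝ × ℝ ↦ ∫ t in p.1..p.2, (laplaceFeature x t - laplaceFeature y t) ^ 2)
      ((𝓝[>] 0) ×ˢ atTop) (𝓝 (2 * fJ x y)) := by
  rcases (add_nonneg hx hy).eq_or_lt with hxy | hxy
  · obtain ⟨rfl, rfl⟩ := (add_eq_zero_iff_of_nonneg hx hy).1 hxy.symm
    simp [fJ]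
  have hlim := ((((tendsto_sq_exp_sub_exp_div_nhdsGT_zero x y).comp tendsto_fst).sub
    ((tendsto_sq_exp_sub_exp_div_atTop hx hy).comp tendsto_snd)).add
    ((tendsto_mul_integral_frullani hx hxy).const_mul 2)).add
    ((tendsto_mul_integral_frullani hy hxy).const_mul 2)
  rw [sub_zero, zero_add, ← mul_add, ← fJ] at hlim
  refine hlim.congr' ?_
  filter_upwards [prod_mem_prod self_mem_nhdsWithin (Ioi_mem_atTop (0 : ℝ))] with p hp
  exact (integral_sq_laplaceFeature_sub x y hp.1 hp.2).symm

lemma integrableOn_and_integral_sq_laplaceFeature_sub {x y : ℝ} (hx : 0 ≤ x) (hy : 0 ≤ y) :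
    IntegrableOn (fun t ↦ (laplaceFeature x t - laplaceFeature y t) ^ 2) (Set.Ioi 0) ∧
      ∫ t in Set.Ioi 0, (laplaceFeature x t - laplaceFeature y t) ^ 2 = 2 * fJ x y :=
  integrableOn_and_integral_Ioi_of_tendsto_intervalIntegral
    ((((continuousOn_laplaceFeature x).sub (continuousOn_laplaceFeature y)).pow
      2).locallyIntegrableOn measurableSet_Ioi)
    (fun _ _ ↦ sq_nonneg _) (tendsto_integral_sq_laplaceFeature_sub hx hy)

lemma memLp_laplaceFeature {x : ℝ} (hx : 0 ≤ x) :
    MemLp (laplaceFeature x) 2 (volume.restrict (Set.Ioi 0)) := by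
  rw [memLp_two_iff_integrable_sq
    ((continuousOn_laplaceFeature x).aestronglyMeasurable measurableSet_Ioi)]
  simpa [laplaceFeature, IntegrableOn] using
    (integrableOn_and_integral_sq_laplaceFeature_sub hx (le_refl 0)).1

/-- The map `x ↦ laplaceFeature x / √2`, through which `f_J` is a squared distance in the Hilbert
space `L²(0, ∞)`. -/
noncomputable def laplaceEmbedding (x : ℝ≥0) : Lp ℝ 2 (volume.restrict (Set.Ioi (0 : ℝ))) :=
  (√2)⁻¹ • (memLp_laplaceFeature x.coe_nonneg).toLp

lemma norm_laplaceEmbedding_sub_sq (x y : ℝ≥0) :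
    ‖laplaceEmbedding x - laplaceEmbedding y‖ ^ 2 = fJ x y := by
  have hx := memLp_laplaceFeature x.coe_nonneg
  have hy := memLp_laplaceFeature y.coe_nonneg
  have hLp : ‖hx.toLp - hy.toLp‖ ^ 2 = 2 * fJ x y := by
    rw [← (integrableOn_and_integral_sq_laplaceFeature_sub x.coe_nonneg y.coe_nonneg).2,
      ← MemLp.toLp_sub, ← real_inner_self_eq_norm_sq, L2.inner_def]
    refine integral_congr_ae ?_
    filter_upwards [(hx.sub hy).coeFn_toLp] with t ht
    rw [ht, real_inner_self_eq_norm_sq, norm_eq_abs, sq_abs, Pi.sub_apply]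
  rw [laplaceEmbedding, laplaceEmbedding, ← smul_sub, norm_smul, mul_pow, hLp, norm_inv, inv_pow,
    norm_eq_abs, sq_abs, sq_sqrt zero_le_two, inv_mul_cancel_left₀ two_ne_zero]

end LaplaceFeature

section JensenShannon

variable {d : ℕ}

/-- The Hilbert space embedding of the nonnegative orthant whose squared distances are `JS`.
Negative coordinates are truncated to `0`. -/
noncomputable def jsEmbedding (p : Fin d → ℝ) :
    PiLp 2 fun _ : Fin d ↦ Lp ℝ 2 (volume.restrict (Set.Ioi (0 : ℝ))) :=
  WithLp.toLp 2 fun i ↦ laplaceEmbedding (p i).toNNReal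

lemma norm_jsEmbedding_sub_sq {p q : Fin d → ℝ} (hp : 0 ≤ p) (hq : 0 ≤ q) :
    ‖jsEmbedding p - jsEmbedding q‖ ^ 2 = JS p q := by
  rw [PiLp.norm_sq_eq_of_L2, JS]
  refine Finset.sum_congr rfl fun i _ ↦ ?_
  rw [PiLp.sub_apply, jsEmbedding, jsEmbedding, norm_laplaceEmbedding_sub_sq,
    coe_toNNReal _ (hp i), coe_toNNReal _ (hq i)]

lemma JS_nonneg {p q : Fin d → ℝ} (hp : 0 ≤ p) (hq : 0 ≤ q) : 0 ≤ JS p q := by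
  rw [← norm_jsEmbedding_sub_sq hp hq]
  positivity

lemma JS_self {p : Fin d → ℝ} (hp : 0 ≤ p) : JS p p = 0 := by
  simp [← norm_jsEmbedding_sub_sq hp hp]

lemma dist_jsEmbedding {p q : Fin d → ℝ} (hp : 0 ≤ p) (hq : 0 ≤ q) :
    dist (jsEmbedding p) (jsEmbedding q) = √(JS p q) := by
  rw [← norm_jsEmbedding_sub_sq hp hq, sqrt_sq (norm_nonneg _), dist_eq_norm]

lemma abs_JS_sub_JS_le {p q p' q' : Fin d → ℝ} (hp : 0 ≤ p) (hq : 0 ≤ q) (hp' : 0 ≤ p')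
    (hq' : 0 ≤ q') :
    |JS p' q' - JS p q| ≤ (√(JS p' q') + √(JS p q)) * (√(JS p' p) + √(JS q' q)) := by
  have hdist := dist_dist_dist_le (jsEmbedding p') (jsEmbedding q') (jsEmbedding p) (jsEmbedding q)
  rw [Real.dist_eq, dist_jsEmbedding hp' hq', dist_jsEmbedding hp hq, dist_jsEmbedding hp' hp,
    dist_jsEmbedding hq' hq] at hdist
  calc |JS p' q' - JS p q| = |√(JS p' q') ^ 2 - √(JS p q) ^ 2| := by
        rw [sq_sqrt (JS_nonneg hp' hq'), sq_sqrt (JS_nonneg hp hq)]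
    _ = (√(JS p' q') + √(JS p q)) * |√(JS p' q') - √(JS p q)| := by
        rw [sq_sub_sq, abs_mul, abs_of_nonneg (by positivity)]
    _ ≤ _ := by gcongr

lemma exists_euclidean_embedding_JS_of_coord_mem (d : ℕ) (S : Finset ℝ) (hS : ∀ x ∈ S, 0 ≤ x) :
    ∃ (m : ℕ) (φ : (Fin d → ℝ) → EuclideanSpace ℝ (Fin m)), m ≤ d * S.card ∧
      ∀ p q, (∀ i, p i ∈ S) → (∀ i, q i ∈ S) → ‖φ p - φ q‖ ^ 2 = JS p q := by
  let e (x : ℝ) := laplaceEmbedding x.toNNReal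
  let V := Submodule.span ℝ (Set.range fun x : S ↦ e x)
  have : FiniteDimensional ℝ V := FiniteDimensional.span_of_finite ℝ (Set.finite_range _)
  have hfinrank : Module.finrank ℝ (PiLp 2 fun _ : Fin d ↦ V) = d * Module.finrank ℝ V := by
    rw [(WithLp.linearEquiv 2 ℝ (Fin d → V)).finrank_eq, Module.finrank_pi_fintype]
    simp
  let ψ (p : Fin d → ℝ) : PiLp 2 fun _ : Fin d ↦ V :=
    WithLp.toLp 2 fun i ↦ V.orthogonalProjectionOnto (e (p i))
  have hψ {p : Fin d → ℝ} (hp : ∀ i, p i ∈ S) (i : Fin d) : (ψ p i : Lp ℝ 2 _) = e (p i) :=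
    V.starProjection_eq_self_iff.2 (Submodule.subset_span ⟨⟨p i, hp i⟩, rfl⟩)
  refine ⟨_, fun p ↦ (stdOrthonormalBasis ℝ (PiLp 2 fun _ : Fin d ↦ V)).repr (ψ p), ?_,
    fun p q hp hq ↦ ?_⟩
  · rw [hfinrank]
    gcongr
    exact (finrank_range_le_card fun x : S ↦ e x).trans_eq (Fintype.card_coe S)
  · rw [← map_sub, LinearIsometryEquiv.norm_map, PiLp.norm_sq_eq_of_L2,
      ← norm_jsEmbedding_sub_sq (fun i ↦ hS _ (hp i)) (fun i ↦ hS _ (hq i)), PiLp.norm_sq_eq_of_L2]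
    refine Finset.sum_congr rfl fun i _ ↦ ?_
    rw [PiLp.sub_apply, PiLp.sub_apply, ← Submodule.norm_coe, Submodule.coe_sub, hψ hp, hψ hq]
    rfl

lemma fJ_le_sq_sub_div_add {x y : ℝ} (hx : 0 ≤ x) (hy : 0 ≤ y) :
    fJ x y ≤ (x - y) ^ 2 / (x + y) := by
  rcases (add_nonneg hx hy).eq_or_lt with hxy | hxy
  · obtain ⟨rfl, rfl⟩ := (add_eq_zero_iff_of_nonneg hx hy).1 hxy.symm
    simp [fJ]
  have hterm {z : ℝ} (hz : 0 ≤ z) :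
      z * log (2 * z / (x + y)) ≤ z * (2 * z / (x + y) - 1) := by
    rcases hz.eq_or_lt with rfl | hz
    · simp
    · gcongr
      exact log_le_sub_one_of_pos (by positivity)
  calc fJ x y ≤ x * (2 * x / (x + y) - 1) + y * (2 * y / (x + y) - 1) :=
        add_le_add (hterm hx) (hterm hy)
    _ = (x - y) ^ 2 / (x + y) := by field_simp; ring

lemma fJ_le_add {x y : ℝ} (hx : 0 ≤ x) (hy : 0 ≤ y) : fJ x y ≤ x + y := by
  refine (fJ_le_sq_sub_div_add hx hy).trans (div_le_of_le_mul₀ (by positivity) (by positivity) ?_)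
  nlinarith [mul_nonneg hx hy]

lemma fJ_le_two_mul_sq_sqrt_sub_sqrt {x y : ℝ} (hx : 0 ≤ x) (hy : 0 ≤ y) :
    fJ x y ≤ 2 * (√x - √y) ^ 2 := by
  refine (fJ_le_sq_sub_div_add hx hy).trans (div_le_of_le_mul₀ (by positivity) (by positivity) ?_)
  calc (x - y) ^ 2 = (√x - √y) ^ 2 * (√x + √y) ^ 2 := by
        rw [← mul_pow, mul_comm, ← sq_sub_sq, sq_sqrt hx, sq_sqrt hy]
    _ ≤ (√x - √y) ^ 2 * (2 * (√x ^ 2 + √y ^ 2)) := by gcongr; exact add_sq_le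
    _ = 2 * (√x - √y) ^ 2 * (x + y) := by rw [sq_sqrt hx, sq_sqrt hy]; ring

lemma JS_le_sum_add_sum {p q : Fin d → ℝ} (hp : 0 ≤ p) (hq : 0 ≤ q) :
    JS p q ≤ ∑ i, p i + ∑ i, q i := by
  rw [← Finset.sum_add_distrib]
  exact Finset.sum_le_sum fun i _ ↦ fJ_le_add (hp i) (hq i)

lemma JS_le_two_of_mem_stdSimplex {p q : Fin d → ℝ} (hp : p ∈ stdSimplex ℝ (Fin d))
    (hq : q ∈ stdSimplex ℝ (Fin d)) : JS p q ≤ 2 := by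
  have hle := JS_le_sum_add_sum hp.1 hq.1
  rwa [hp.2, hq.2, one_add_one_eq_two] at hle

lemma JS_eq_zero_of_subsingleton [Subsingleton (Fin d)] {p q : Fin d → ℝ}
    (hp : p ∈ stdSimplex ℝ (Fin d)) (hq : q ∈ stdSimplex ℝ (Fin d)) : JS p q = 0 := by
  obtain rfl : p = q := congrArg Subtype.val
    (Subsingleton.elim (⟨p, hp⟩ : stdSimplex ℝ (Fin d)) ⟨q, hq⟩)
  exact JS_self hp.1

end JensenShannon

section SqrtGrid

/-- The largest number of the form `(k / N)²`, `k ∈ ℕ`, that is at most `x`. On such a grid, uniform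
in `√x`, rounding costs the same in the distance `√f_J` near `0` as elsewhere. -/
noncomputable def sqrtGridFloor (N : ℕ) (x : ℝ) : ℝ := (⌊N * √x⌋₊ / N) ^ 2

/-- The values of `sqrtGridFloor N` on `[0, 1]`. -/
noncomputable def sqrtGrid (N : ℕ) : Finset ℝ :=
  (Finset.range (N + 1)).image fun k : ℕ ↦ ((k : ℝ) / N) ^ 2

lemma nonneg_of_mem_sqrtGrid {N : ℕ} {x : ℝ} (hx : x ∈ sqrtGrid N) : 0 ≤ x := by
  obtain ⟨k, -, rfl⟩ := Finset.mem_image.1 hx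
  positivity

lemma card_sqrtGrid_le (N : ℕ) : (sqrtGrid N).card ≤ N + 1 :=
  Finset.card_image_le.trans_eq (Finset.card_range _)

lemma sqrtGridFloor_mem_sqrtGrid (N : ℕ) {x : ℝ} (hx : x ≤ 1) :
    sqrtGridFloor N x ∈ sqrtGrid N := by
  have hfloor : ⌊N * √x⌋₊ ≤ N := Nat.floor_le_of_le <|
    mul_le_of_le_one_right N.cast_nonneg (sqrt_le_one.2 hx)
  exact Finset.mem_image_of_mem _ (Finset.mem_range_succ_iff.2 hfloor)

lemma sqrtGridFloor_nonneg (N : ℕ) (x : ℝ) : 0 ≤ sqrtGridFloor N x := sq_nonneg _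

lemma sqrt_sqrtGridFloor (N : ℕ) (x : ℝ) : √(sqrtGridFloor N x) = ⌊N * √x⌋₊ / N :=
  sqrt_sq (by positivity)

lemma sqrtGridFloor_le (N : ℕ) {x : ℝ} (hx : 0 ≤ x) : sqrtGridFloor N x ≤ x := by
  refine (sqrt_le_sqrt_iff hx).1 ?_
  rw [sqrt_sqrtGridFloor]
  refine div_le_of_le_mul₀ N.cast_nonneg (sqrt_nonneg x) ?_
  rw [mul_comm]
  exact Nat.floor_le (by positivity)

lemma sqrt_le_sqrt_sqrtGridFloor_add {N : ℕ} (hN : N ≠ 0) (x : ℝ) :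
    √x ≤ √(sqrtGridFloor N x) + 1 / N := by
  rw [sqrt_sqrtGridFloor, ← add_div, le_div_iff₀ (by positivity), mul_comm]
  exact (Nat.lt_floor_add_one _).le

lemma fJ_sqrtGridFloor_le {N : ℕ} (hN : N ≠ 0) {x : ℝ} (hx : 0 ≤ x) :
    fJ (sqrtGridFloor N x) x ≤ 2 / N ^ 2 := by
  have hlower := sqrt_le_sqrt (sqrtGridFloor_le N hx)
  have hupper := sqrt_le_sqrt_sqrtGridFloor_add hN x
  have hgap : (√x - √(sqrtGridFloor N x)) ^ 2 ≤ (1 / N) ^ 2 :=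
    pow_le_pow_left₀ (sub_nonneg.2 hlower) (by linarith) 2
  calc fJ (sqrtGridFloor N x) x ≤ 2 * (√(sqrtGridFloor N x) - √x) ^ 2 :=
        fJ_le_two_mul_sq_sqrt_sub_sqrt (sqrtGridFloor_nonneg N x) hx
    _ ≤ 2 * (1 / N) ^ 2 := by rw [sub_sq_comm]; gcongr
    _ = 2 / N ^ 2 := by ring

variable {d N : ℕ} {p q : Fin d → ℝ}

lemma sqrt_JS_sqrtGridFloor_le (hN : N ≠ 0) (hp : 0 ≤ p) :
    √(JS (sqrtGridFloor N ∘ p) p) ≤ √2 * √d / N := by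
  refine sqrt_le_iff.2 ⟨by positivity, ?_⟩
  calc JS (sqrtGridFloor N ∘ p) p ≤ ∑ _i : Fin d, (2 : ℝ) / N ^ 2 :=
        Finset.sum_le_sum fun i _ ↦ fJ_sqrtGridFloor_le hN (hp i)
    _ = (√2 * √d / N) ^ 2 := by
        rw [div_pow, mul_pow, sq_sqrt zero_le_two, sq_sqrt d.cast_nonneg]
        simp only [Finset.sum_const, Finset.card_univ, Fintype.card_fin, nsmul_eq_mul]
        ring

lemma abs_JS_sqrtGridFloor_sub_JS_le (hN : N ≠ 0) (hp : p ∈ stdSimplex ℝ (Fin d))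
    (hq : q ∈ stdSimplex ℝ (Fin d)) :
    |JS (sqrtGridFloor N ∘ p) (sqrtGridFloor N ∘ q) - JS p q| ≤ 8 * √d / N := by
  have hfloor (r : Fin d → ℝ) : 0 ≤ sqrtGridFloor N ∘ r := fun i ↦ sqrtGridFloor_nonneg N (r i)
  have hsum {r : Fin d → ℝ} (hr : r ∈ stdSimplex ℝ (Fin d)) :
      ∑ i, (sqrtGridFloor N ∘ r) i ≤ 1 :=
    (Finset.sum_le_sum fun i _ ↦ sqrtGridFloor_le N (hr.1 i)).trans_eq hr.2
  have hJS : JS p q ≤ 2 := JS_le_two_of_mem_stdSimplex hp hq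
  have hJS' : JS (sqrtGridFloor N ∘ p) (sqrtGridFloor N ∘ q) ≤ 2 :=
    (JS_le_sum_add_sum (hfloor p) (hfloor q)).trans (by linarith [hsum hp, hsum hq])
  calc |JS (sqrtGridFloor N ∘ p) (sqrtGridFloor N ∘ q) - JS p q|
      ≤ (√(JS (sqrtGridFloor N ∘ p) (sqrtGridFloor N ∘ q)) + √(JS p q)) *
          (√(JS (sqrtGridFloor N ∘ p) p) + √(JS (sqrtGridFloor N ∘ q) q)) :=
        abs_JS_sub_JS_le hp.1 hq.1 (hfloor p) (hfloor q)
    _ ≤ (√2 + √2) * (√2 * √d / N + √2 * √d / N) := by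
        gcongr
        exacts [sqrt_JS_sqrtGridFloor_le hN hp.1, sqrt_JS_sqrtGridFloor_le hN hq.1]
    _ = √2 ^ 2 * (4 * √d / N) := by ring
    _ = 8 * √d / N := by rw [sq_sqrt zero_le_two]; ring

lemma exists_euclidean_embedding_abs_sub_JS_le (d : ℕ) (hN : N ≠ 0) :
    ∃ (m : ℕ) (φ : (Fin d → ℝ) → EuclideanSpace ℝ (Fin m)), m ≤ d * (N + 1) ∧
      ∀ p ∈ stdSimplex ℝ (Fin d), ∀ q ∈ stdSimplex ℝ (Fin d),
        |‖φ p - φ q‖ ^ 2 - JS p q| ≤ 8 * √d / N := by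
  obtain ⟨m, φ, hm, hφ⟩ :=
    exists_euclidean_embedding_JS_of_coord_mem d (sqrtGrid N) fun _ ↦ nonneg_of_mem_sqrtGrid
  have hmem {r : Fin d → ℝ} (hr : r ∈ stdSimplex ℝ (Fin d)) (i : Fin d) :
      (sqrtGridFloor N ∘ r) i ∈ sqrtGrid N :=
    sqrtGridFloor_mem_sqrtGrid N (mem_Icc_of_mem_stdSimplex hr i).2
  refine ⟨m, fun p ↦ φ (sqrtGridFloor N ∘ p), hm.trans (by gcongr; exact card_sqrtGrid_le N),
    fun p hp q hq ↦ ?_⟩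
  rw [hφ _ _ (hmem hp) (hmem hq)]
  exact abs_JS_sqrtGridFloor_sub_JS_le hN hp hq

end SqrtGrid

lemma mul_ceil_add_one_le {d ε : ℝ} (hd : 2 ≤ d) (hε0 : 0 < ε) (hε2 : ε ≤ 2) :
    d * (⌈8 * √d / ε⌉₊ + 1) ≤ 24 * (√d * (d - 1) / ε) := by
  have hceil := (Nat.ceil_lt_add_one (show 0 ≤ 8 * √d / ε by positivity)).le
  have hsqrt : 1 ≤ √d := one_le_sqrt.2 (by linarith)
  have htwo : 2 ≤ 4 * √d / ε := by
    rw [le_div_iff₀ hε0]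
    linarith
  calc d * (⌈8 * √d / ε⌉₊ + 1) ≤ d * (8 * √d / ε + 4 * √d / ε) := by gcongr d * ?_; linarith
    _ = 12 * √d / ε * d := by ring
    _ ≤ 12 * √d / ε * (2 * (d - 1)) := by gcongr; linarith
    _ = 24 * (√d * (d - 1) / ε) := by ring

lemma sqrt_mul_sub_one_div_le {d ε : ℝ} (hd : 1 ≤ d) (hε0 : 0 < ε) (hε1 : ε ≤ 1) :
    √d * (d - 1) / ε ≤ d ^ 2 / ε * log (d / ε) := by
  have hlog : 1 - d⁻¹ ≤ log d := one_sub_inv_le_log_of_pos (by linarith)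
  calc √d * (d - 1) / ε ≤ d * (d - 1) / ε := by
        gcongr
        exact sqrt_le_self_iff.2 (Or.inr hd)
    _ = d ^ 2 / ε * (1 - d⁻¹) := by field_simp
    _ ≤ d ^ 2 / ε * log d := by gcongr
    _ ≤ d ^ 2 / ε * log (d / ε) := by
        gcongr
        exact le_div_self (by linarith) hε0 hε1

theorem js_additive_embedding_general :
    ∃ C : ℝ, 0 < C ∧
      ∀ (d : ℕ) (ε : ℝ), 0 < ε →
        ∃ (m : ℕ) (φ : (Fin d → ℝ) → EuclideanSpace ℝ (Fin m)),
          (m : ℝ) ≤ C * (√d * (d - 1) / ε) ∧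
          ∀ p ∈ stdSimplex ℝ (Fin d), ∀ q ∈ stdSimplex ℝ (Fin d),
            |‖φ p - φ q‖ ^ 2 - JS p q| ≤ ε := by
  refine ⟨24, by norm_num, fun d ε hε ↦ ?_⟩
  by_cases hsmall : d ≤ 1 ∨ 2 ≤ ε
  · refine ⟨0, 0, ?_, fun p hp q hq ↦ ?_⟩
    · have : 0 ≤ √d * ((d : ℝ) - 1) := by
        rcases d.eq_zero_or_pos with rfl | hd
        · simp
        · exact mul_nonneg (sqrt_nonneg _) (sub_nonneg.2 (by exact_mod_cast hd))
      rw [Nat.cast_zero]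
      positivity
    · rw [Pi.zero_apply, Pi.zero_apply, sub_self, norm_zero, zero_pow two_ne_zero, zero_sub,
        abs_neg, abs_of_nonneg (JS_nonneg hp.1 hq.1)]
      rcases hsmall with hd | hε2
      · have := Fin.subsingleton_iff_le_one.2 hd
        exact (JS_eq_zero_of_subsingleton hp hq).trans_le hε.le
      · exact (JS_le_two_of_mem_stdSimplex hp hq).trans hε2
  · push Not at hsmall
    have hd : (2 : ℝ) ≤ d := by exact_mod_cast hsmall.1
    have hN : ⌈8 * √d / ε⌉₊ ≠ 0 := (Nat.ceil_pos.2 (by positivity)).ne'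
    obtain ⟨m, φ, hm, hφ⟩ := exists_euclidean_embedding_abs_sub_JS_le d hN
    refine ⟨m, φ, ?_, fun p hp q hq ↦ (hφ p hp q hq).trans ?_⟩
    · have hm' : (m : ℝ) ≤ d * (⌈8 * √d / ε⌉₊ + 1) := by exact_mod_cast hm
      exact hm'.trans (mul_ceil_add_one_le hd hε hsmall.2.le)
    · rw [div_le_comm₀ (by positivity) hε]
      exact Nat.le_ceil _

/-- deterministic additive-error embedding of JS into `ℓ₂²` in
`O((d²/ε)·log(d/ε))` dimensions. -/
theorem js_additive_embedding :
    ∃ C : ℝ, 0 < C ∧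
      ∀ d : ℕ, 1 ≤ d → ∀ ε : ℝ, ε ∈ Set.Ioo (0 : ℝ) 1 →
        ∃ (m : ℕ) (φ : (Fin d → ℝ) → EuclideanSpace ℝ (Fin m)),
          (m : ℝ) ≤ C * ((d : ℝ) ^ 2 / ε) * Real.log ((d : ℝ) / ε) ∧
          ∀ p ∈ stdSimplex ℝ (Fin d), ∀ q ∈ stdSimplex ℝ (Fin d),
            |‖φ p - φ q‖ ^ 2 - JS p q| ≤ ε := by
  obtain ⟨C, hC, h⟩ := js_additive_embedding_general
  refine ⟨C, hC, fun d hd ε ⟨hε0, hε1⟩ ↦ ?_⟩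
  obtain ⟨m, φ, hm, hφ⟩ := h d ε hε0
  refine ⟨m, φ, hm.trans ?_, hφ⟩
  rw [mul_assoc]
  gcongr
  exact sqrt_mul_sub_one_div_le (by exact_mod_cast hd) hε0 hε1.le
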